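/- arXiv:1407.4316 — 5 statements merged into one kernel-verified Lean document; each statement's English description precedes it below -/
import Mathlib

section
/- Let R be a commutative ring, n ≥ 1, and A, B ∈ M_n(R) arbitrary square matrices. Then the characteristic polynomial of the 2n×2n block matrix M = [[0, A],[B, 0]] (zero diagonal blocks, A in the upper-right block, B in the lower-left block) satisfies χ_M(X) = χ_{A·B}(X²); that is, the characteristic polynomial of M equals the composition of the characteristic polynomial of A·B with the polynomial X². -/
/-!
Multiplying `[[x, A], [B, y]]` on the right by `[[y, 0], [-B, 1]]` gives `[[x y - A B, A], [0, y]]`.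
This is block elimination with the denominator `y` cleared, so `y` need not be invertible. Taking
determinants at `x = y = X` and cancelling a power of the regular element `X` relates the two
characteristic polynomials.
-/

open Matrix Polynomial

section

variable {R m n : Type*} [CommRing R] [Fintype m] [DecidableEq m] [Fintype n] [DecidableEq n]

theorem charpoly_comp_eq_det (M : Matrix m m R) (p : R[X]) :
    M.charpoly.comp p = (scalar m p - M.map C).det := by
  calc M.charpoly.comp p = (M.charpoly.map C).eval p := (eval_map C p).symm
    _ = (M.map C).charpoly.eval p := by rw [charpoly_map]
    _ = (scalar m p - M.map C).det := eval_charpoly _ p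

theorem fromBlocks_scalar_mul_fromBlocks (x y : R) (A : Matrix m n R) (B : Matrix n m R) :
    fromBlocks (scalar m x) A B (scalar n y) * fromBlocks (scalar m y) 0 (-B) 1 =
      fromBlocks (scalar m (x * y) - A * B) A 0 (scalar n y) := by
  have B_mul_scalar : B * scalar m y = scalar n y * B := (scalar_comm y (Commute.all y) B).symm
  rw [fromBlocks_multiply, B_mul_scalar]
  simp only [Matrix.mul_neg, Matrix.mul_zero, Matrix.mul_one, zero_add, add_neg_cancel,
    ← sub_eq_add_neg, ← map_mul]

theorem pow_card_mul_det_fromBlocks_scalar (x y : R) (A : Matrix m n R) (B : Matrix n m R) :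
    y ^ Fintype.card m * (fromBlocks (scalar m x) A B (scalar n y)).det =
      y ^ Fintype.card n * (scalar m (x * y) - A * B).det := by
  have hdet := congrArg det (fromBlocks_scalar_mul_fromBlocks x y A B)
  simpa only [det_mul, det_fromBlocks_zero₁₂, det_fromBlocks_zero₂₁, scalar_apply, det_diagonal,
    Finset.prod_const, Finset.card_univ, det_one, mul_one, mul_comm] using hdet

theorem stmt_0_general (A : Matrix m n R) (B : Matrix n m R) :
    X ^ Fintype.card m * (fromBlocks 0 A B 0).charpoly =
      X ^ Fintype.card n * (A * B).charpoly.comp (X ^ 2) := by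
  rw [charpoly, charmatrix_fromBlocks, charmatrix_zero, charmatrix_zero,
    pow_card_mul_det_fromBlocks_scalar, charpoly_comp_eq_det, Matrix.neg_mul, Matrix.mul_neg,
    neg_neg, ← Matrix.map_mul, sq]

end

/-- The characteristic polynomial of the block matrix `[[0, A],[B, 0]]` equals the
characteristic polynomial of `A * B` composed with `X ^ 2`. -/
theorem stmt_0 {R : Type*} [CommRing R] {n : ℕ} (hn : 1 ≤ n)
    (A B : Matrix (Fin n) (Fin n) R) :
    (Matrix.fromBlocks 0 A B 0).charpoly = (A * B).charpoly.comp (Polynomial.X ^ 2) :=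
  (isRegular_X_pow (Fintype.card (Fin n))).left (stmt_0_general A B)
end

section
/- Let F be a field of characteristic zero, n ≥ 1, and g ∈ M_n(F) an invertible matrix. Then g is semisimple if and only if g² is semisimple. -/
/-- A square matrix over a field is semisimple if the linear endomorphism it induces is
semisimple. -/
def Matrix.IsSemisimple {F : Type*} [Field F] {n : ℕ} (g : Matrix (Fin n) (Fin n) F) : Prop :=
  Module.End.IsSemisimple (Matrix.toLin' g)

/-!
Let `f` be an endomorphism of a module over a commutative ring `R`.

If `f` is semisimple, then so is `f ^ k` for `k ≠ 0`, because `R[X]` is integral over `R[X ^ k]`: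
maximal ideals of `R[X]` contract to maximal ideals, so a simple `R[X]`-module is a vector space
over a residue field of `R[X ^ k]`.

The converse, for injective `f` and `k` invertible in `R`, is an averaging argument in the style of
Maschke: if `p` is `f`-invariant and `π` is a projection onto `p` commuting with `f ^ k`, then
`σ = ∑ i < k, f ^ i * π * f ^ (k - i)` commutes with `f` and restricts to `k • f ^ k` on `p`. The
latter is bijective on `p`, so `ker σ` is an invariant complement of `p`.
-/

section RestrictScalars

open Module

variable {A B M N : Type*} [CommRing A] [CommRing B] [AddCommGroup M] [AddCommGroup N]

theorem isSemisimpleModule_of_isMaximal_annihilator [Module A M]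
    [(annihilator A M).IsMaximal] : IsSemisimpleModule A M :=
  let := Ideal.Quotient.field (annihilator A M)
  (isTorsionBySet_annihilator A M).isSemisimpleModule_iff.mp inferInstance

section IsScalarTower

variable (A B M) [Algebra A B] [Algebra.IsIntegral A B] [Module A M] [Module B M]
  [IsScalarTower A B M]

theorem isSemisimpleModule_of_isSimpleModule_of_isIntegral [IsSimpleModule B M] :
    IsSemisimpleModule A M := by
  have : (annihilator B M).IsMaximal := IsSimpleModule.annihilator_isMaximal
  have : (annihilator A M).IsMaximal := by
    rw [← comap_annihilator (R := B)]
    exact Ideal.isMaximal_comap_of_isIntegral_of_isMaximal _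
  exact isSemisimpleModule_of_isMaximal_annihilator

theorem isSemisimpleModule_of_isIntegral [IsSemisimpleModule B M] : IsSemisimpleModule A M := by
  obtain ⟨s, e, -, hs⟩ := IsSemisimpleModule.exists_linearEquiv_dfinsupp B M
  have (m : s) : IsSemisimpleModule A m.1 :=
    isSemisimpleModule_of_isSimpleModule_of_isIntegral A B m.1
  exact .congr (e.restrictScalars A)

end IsScalarTower

theorem isSemisimpleModule_of_injective_of_isIntegral [Module A N] [Module B M]
    [IsSemisimpleModule B M] {φ : A →+* B} (hφ : φ.IsIntegral) (l : N →ₛₗ[φ] M)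
    (hl : Function.Injective l) : IsSemisimpleModule A N := by
  algebraize [φ]
  let := Module.compHom M φ
  have : IsScalarTower A B M := .of_compHom A B M
  have := isSemisimpleModule_of_isIntegral A B M
  exact .of_injective { l with map_smul' := l.map_smulₛₗ } hl

end RestrictScalars

section Aeval

open Polynomial Module

variable {R M : Type*} [CommRing R] [AddCommGroup M] [Module R M] {f : End R M}

theorem isIntegral_compRingHom {q : R[X]} (hq : q.Monic) (hdeg : 0 < q.degree) :
    (compRingHom q).IsIntegral := by
  have hC (r : R) : (compRingHom q).IsIntegralElem (C r) := by
    simpa using (compRingHom q).isIntegralElem_map (x := C r)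
  -- `X` is a root of `q(T) - q(X)`, viewed as a polynomial in `T` over the image `R[q(X)]`.
  have hX : (compRingHom q).IsIntegralElem X := by
    refine ⟨q.map C - C X, (hq.map C).sub_of_left ?_, ?_⟩
    · rw [degree_map_eq_of_injective C_injective]
      exact degree_C_le.trans_lt hdeg
    · have hcomp : (compRingHom q).comp C = C := RingHom.ext fun r => by simp
      rw [eval₂_sub, eval₂_map, hcomp, eval₂_C, coe_compRingHom_apply, X_comp, eval₂_C_X, sub_self]
  intro p
  induction p using Polynomial.induction_on with
  | C r => exact hC r
  | add p₁ p₂ h₁ h₂ => exact h₁.add _ h₂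
  | monomial n r h =>
    rw [pow_succ, ← mul_assoc]
    exact h.mul _ hX

theorem isSemisimple_aeval_of_monic (hf : f.IsSemisimple) {q : R[X]} (hq : q.Monic)
    (hdeg : 0 < q.degree) : (aeval f q).IsSemisimple := by
  let l : AEval' (aeval f q) →ₛₗ[compRingHom q] AEval' f :=
    { toFun x := AEval'.of f ((AEval'.of (aeval f q)).symm x)
      map_add' x y := by simp only [map_add]
      map_smul' p x := by
        rw [AEval.of_symm_smul, coe_compRingHom_apply, ← AEval.of_aeval_smul, aeval_comp] }
  have : IsSemisimpleModule R[X] (AEval' f) := hf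
  exact isSemisimpleModule_of_injective_of_isIntegral (isIntegral_compRingHom hq hdeg) l
    ((AEval'.of f).injective.comp (AEval'.of (aeval f q)).symm.injective)

theorem isSemisimple_pow (hf : f.IsSemisimple) {k : ℕ} (hk : k ≠ 0) : (f ^ k).IsSemisimple := by
  obtain _ | _ := subsingleton_or_nontrivial R
  · have := Module.subsingleton R M
    rwa [Subsingleton.elim (f ^ k) f]
  · rw [← aeval_X_pow (R := R)]
    refine isSemisimple_aeval_of_monic hf (monic_X_pow k) ?_
    rw [degree_X_pow]
    exact_mod_cast Nat.pos_of_ne_zero hk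

end Aeval

section Averaging

open Module Finset

theorem commute_sum_pow_mul_mul_pow {S : Type*} [Ring S] {a b : S} {k : ℕ}
    (h : Commute (a ^ k) b) : Commute a (∑ i ∈ range k, a ^ i * b * a ^ (k - i)) := by
  let t (i : ℕ) : S := a ^ i * b * a ^ (k + 1 - i)
  have hleft : a * ∑ i ∈ range k, a ^ i * b * a ^ (k - i) = ∑ i ∈ range k, t (i + 1) := by
    simp only [t, mul_sum, pow_succ', mul_assoc, Nat.add_sub_add_right]
  have hright : (∑ i ∈ range k, a ^ i * b * a ^ (k - i)) * a = ∑ i ∈ range k, t i := by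
    rw [sum_mul]
    refine sum_congr rfl fun i hi => ?_
    simp only [t, Nat.succ_sub (mem_range.mp hi).le, pow_succ, mul_assoc]
  have hends : t k = t 0 := by
    simp only [t, Nat.add_sub_cancel_left, pow_zero, one_mul, Nat.sub_zero, h.eq, pow_succ,
      mul_assoc b]
  rw [commute_iff_eq, ← sub_eq_zero, hleft, hright, ← sum_sub_distrib, sum_range_sub, hends,
    sub_self]

variable {R M : Type*} [CommRing R] [AddCommGroup M] [Module R M] {f : End R M}
  {p : Submodule R M}

theorem isCompl_ker_of_bijOn (hmem : ∀ x, f x ∈ p) (hbij : Set.BijOn f p p) :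
    IsCompl p (LinearMap.ker f) := by
  refine ⟨Submodule.disjoint_def.mpr fun x hx hfx => ?_, Submodule.codisjoint_iff_exists_add_eq.mpr
    fun x => ?_⟩
  · exact hbij.injOn hx p.zero_mem (hfx.trans f.map_zero.symm)
  · obtain ⟨y, hy, hfy⟩ := hbij.surjOn (hmem x)
    exact ⟨y, x - y, hy, LinearMap.sub_mem_ker_iff.mpr hfy.symm, add_sub_cancel y x⟩

theorem exists_isProj_commute_of_isSemisimple (hf : f.IsSemisimple) (hp : p ∈ f.invtSubmodule) :
    ∃ π : End R M, LinearMap.IsProj p π ∧ Commute f π := by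
  obtain ⟨q, hq, hpq⟩ := End.isSemisimple_iff.mp hf p hp
  have hcomm : Commute (p.projection q hpq) f := by
    rw [LinearMap.IsIdempotentElem.commute_iff (Submodule.isIdempotentElem_projection hpq),
      Submodule.range_projection, Submodule.ker_projection]
    exact ⟨hp, hq⟩
  exact ⟨p.projection q hpq, ⟨Submodule.projection_apply_mem hpq,
    fun _ => Submodule.projection_apply_of_mem_left hpq⟩, hcomm.symm⟩

theorem bijOn_of_isSemisimple_of_injective (hf : f.IsSemisimple) (hinj : Function.Injective f)
    (hp : p ∈ f.invtSubmodule) : Set.BijOn f p p := by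
  have hle : p.map f ≤ p := (End.mem_invtSubmodule_iff_map_le f).mp hp
  have hmap : p.map f ∈ f.invtSubmodule :=
    (End.mem_invtSubmodule_iff_map_le f).mpr (Submodule.map_mono hle)
  obtain ⟨q, hq, hcompl⟩ := End.isSemisimple_iff.mp hf _ hmap
  have hdisj : Disjoint p q := by
    refine Submodule.disjoint_def.mpr fun x hxp hxq => (map_eq_zero_iff f hinj).mp ?_
    exact Submodule.disjoint_def.mp hcompl.disjoint _ (Submodule.mem_map_of_mem hxp) (hq hxq)
  have heq : p.map f = p :=
    eq_of_le_of_inf_le_of_sup_le hle (hdisj.eq_bot.trans_le bot_le)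
      (le_top.trans hcompl.sup_eq_top.ge)
  exact ⟨hp, hinj.injOn, (SetLike.coe_set_eq.mpr heq).ge⟩

theorem bijOn_smul_of_isUnit {c : R} (hc : IsUnit c) :
    Set.BijOn (c • · : M → M) p p := by
  obtain ⟨u, rfl⟩ := hc
  exact Set.InvOn.bijOn (f' := (u⁻¹ • ·))
    ⟨fun x _ => inv_smul_smul u x, fun x _ => smul_inv_smul u x⟩
    (fun _ => p.smul_mem (u : R)) fun _ => p.smul_mem (↑u⁻¹ : R)

theorem isSemisimple_of_isSemisimple_pow (hinj : Function.Injective f) {k : ℕ}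
    (hk : IsUnit (k : R)) (hf : (f ^ k).IsSemisimple) : f.IsSemisimple := by
  refine End.isSemisimple_iff.mpr fun p hp => ?_
  have hp_pow (i : ℕ) : p ∈ (f ^ i).invtSubmodule := by
    rw [End.mem_invtSubmodule_iff_mapsTo, End.coe_pow]
    exact Set.MapsTo.iterate hp i
  have hinj_pow : Function.Injective (f ^ k) := by
    rw [End.coe_pow]
    exact hinj.iterate k
  obtain ⟨π, hπ, hcomm⟩ := exists_isProj_commute_of_isSemisimple hf (hp_pow k)
  let σ : End R M := ∑ i ∈ range k, f ^ i * π * f ^ (k - i)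
  have hσ_apply (x : M) : σ x = ∑ i ∈ range k, (f ^ i) (π ((f ^ (k - i)) x)) := by
    simp only [σ, LinearMap.sum_apply, End.mul_apply]
  have hσ_comm : Commute f σ := commute_sum_pow_mul_mul_pow hcomm
  have hσ_mem (x : M) : σ x ∈ p := by
    rw [hσ_apply]
    exact p.sum_mem fun i _ => hp_pow i (hπ.map_mem _)
  have hσ_eqOn : Set.EqOn ((k : R) • f ^ k) σ p := by
    intro x hx
    have hterm : ∀ i ∈ range k, (f ^ i) (π ((f ^ (k - i)) x)) = (f ^ k) x := by
      intro i hi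
      rw [hπ.map_id _ (hp_pow _ hx), ← End.mul_apply, pow_mul_pow_sub _ (mem_range.mp hi).le]
    rw [hσ_apply, sum_congr rfl hterm, sum_const, card_range, LinearMap.smul_apply,
      Nat.cast_smul_eq_nsmul]
  have hσ_bij : Set.BijOn σ p p :=
    ((bijOn_smul_of_isUnit hk).comp
      (bijOn_of_isSemisimple_of_injective hf hinj_pow (hp_pow k))).congr hσ_eqOn
  have hker : LinearMap.ker σ ∈ f.invtSubmodule := by
    intro x hx
    rw [Submodule.mem_comap, LinearMap.mem_ker, ← End.mul_apply, ← hσ_comm.eq, End.mul_apply,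
      LinearMap.mem_ker.mp hx, map_zero]
  exact ⟨LinearMap.ker σ, hker, isCompl_ker_of_bijOn hσ_mem hσ_bij⟩

end Averaging

theorem stmt_1_general {R M : Type*} [CommRing R] [AddCommGroup M] [Module R M]
    {f : Module.End R M} (hf : Function.Injective f) {k : ℕ} (hk : IsUnit (k : R)) :
    f.IsSemisimple ↔ (f ^ k).IsSemisimple := by
  refine ⟨fun h => ?_, isSemisimple_of_isSemisimple_pow hf hk⟩
  obtain rfl | hk0 := eq_or_ne k 0
  · have : Subsingleton R := subsingleton_of_zero_eq_one (isUnit_zero_iff.mp (by simpa using hk))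
    have := Module.subsingleton R M
    rwa [Subsingleton.elim (f ^ 0) f]
  · exact isSemisimple_pow h hk0

/-- Over a field of characteristic zero, an invertible matrix `g` is semisimple
if and only if `g ^ 2` is semisimple. -/
theorem stmt_1 {F : Type*} [Field F] [CharZero F] {n : ℕ} (hn : 1 ≤ n)
    (g : Matrix (Fin n) (Fin n) F) (hg : IsUnit g) :
    g.IsSemisimple ↔ (g ^ 2).IsSemisimple := by
  rw [Matrix.IsSemisimple, Matrix.IsSemisimple, Matrix.toLin'_pow]
  exact stmt_1_general (Matrix.mulVec_injective_of_isUnit hg) (by simp)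
end

section
/- Let F be a field of characteristic zero, N ≥ 1, and g ∈ GL_N(F). Set θ(g) = (g⁻¹)ᵀ. Then the characteristic polynomial of the 2N×2N block matrix i(gθ) = [[0, g],[θ(g), 0]] is squarefree (split with simple roots over an algebraic closure) if and only if the characteristic polynomial of g·θ(g) is squarefree. -/
open scoped Matrix

/-!
The characteristic polynomial of `[[0, A], [B, 0]]` is `χ_{AB}(X²)`, so the question is whether
`p` and `p(X²)` are squarefree together when `p(0) ≠ 0`. Squares dividing `p` give squares dividing
`p(X²)`. Conversely, let `q` be irreducible with `q² ∣ p(X²)`. Since `p(X²)` is even,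
`q(-X)² ∣ p(X²)`. If `q(-X)` is associated to `q`, then `q` is even, because `2 ≠ 0` and `X ∤ q`;
otherwise `q` and `q(-X)` are relatively prime and their product is even. Either way some `h(X²)`,
divisible by `q`, has its square dividing `p(X²)`, whence `h² ∣ p`. This avoids separability, so it
works over any factorial domain in which `2 ≠ 0`.
-/

section ExpandTwo

open Polynomial

section CommSemiring

variable {R : Type*} [CommSemiring R] {n : ℕ} {p q : R[X]}

lemma expand_dvd_expand_iff (hn : n ≠ 0) : expand R n p ∣ expand R n q ↔ p ∣ q := by
  refine ⟨fun ⟨r, hr⟩ => ⟨contract n r, ?_⟩, _root_.map_dvd (expand R n)⟩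
  rw [mul_comm, ← contract_mul_expand hn, mul_comm, ← hr, contract_expand _ hn]

lemma isUnit_expand_iff (hn : n ≠ 0) : IsUnit (expand R n p) ↔ IsUnit p := by
  rw [isUnit_iff_dvd_one, isUnit_iff_dvd_one, ← expand_dvd_expand_iff hn (p := p), map_one]

lemma squarefree_of_squarefree_expand (hn : n ≠ 0) (h : Squarefree (expand R n p)) :
    Squarefree p := fun q hq =>
  (isUnit_expand_iff hn).1 <| h _ <| by rwa [← map_mul, expand_dvd_expand_iff hn]

end CommSemiring

variable {R : Type*} [CommRing R]

lemma expand_two_comp_neg_X (p : R[X]) : (expand R 2 p).comp (-X) = expand R 2 p := by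
  simp [expand_eq_comp_X_pow, comp_assoc]

variable [IsDomain R]

lemma comp_neg_X_eq_or_eq_neg_of_associated {p : R[X]} (h : Associated p (p.comp (-X))) :
    p.comp (-X) = p ∨ p.comp (-X) = -p := by
  obtain rfl | hp := eq_or_ne p 0
  · simp
  obtain ⟨u, hu⟩ := h
  obtain ⟨c, -, hc⟩ := Polynomial.isUnit_iff.1 u.isUnit
  rw [← hc] at hu
  have hlead : p.leadingCoeff * c = p.leadingCoeff * (-1) ^ p.natDegree := by
    rw [mul_comm _ ((-1) ^ _), ← comp_neg_X_leadingCoeff_eq, ← hu, leadingCoeff_mul,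
      leadingCoeff_C]
  have hsign : c = (-1) ^ p.natDegree := mul_left_cancel₀ (leadingCoeff_ne_zero.2 hp) hlead
  rw [← hu, hsign]
  rcases neg_one_pow_eq_or R p.natDegree with hpow | hpow <;> simp [hpow]

variable [NeZero (2 : R)]

lemma eq_zero_of_eq_neg_self {a : R} (h : a = -a) : a = 0 :=
  (mul_eq_zero.1 (show 2 * a = 0 by linear_combination h)).resolve_left two_ne_zero

lemma exists_expand_two_eq_of_comp_neg_X_eq {p : R[X]} (h : p.comp (-X) = p) :
    ∃ q, expand R 2 q = p := by
  refine ⟨contract 2 p, ext fun k => ?_⟩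
  rw [coeff_expand two_pos, coeff_contract two_ne_zero]
  split_ifs with hk
  · rw [Nat.div_mul_cancel hk]
  · have hodd : Odd k := by rwa [← Nat.not_even_iff_odd, even_iff_two_dvd]
    have hcoeff : (p.comp (-X)).coeff k = -p.coeff k := by
      rw [neg_eq_neg_one_mul (X : R[X]), ← C_1, ← C_neg, comp_C_mul_X_coeff, hodd.neg_one_pow,
        mul_neg_one]
    rw [h] at hcoeff
    exact (eq_zero_of_eq_neg_self hcoeff).symm

lemma X_dvd_of_comp_neg_X_eq_neg {p : R[X]} (h : p.comp (-X) = -p) : X ∣ p := by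
  rw [X_dvd_iff, coeff_zero_eq_eval_zero]
  exact eq_zero_of_eq_neg_self (by simpa using congrArg (eval 0) h)

lemma exists_expand_two_eq_of_associated_comp_neg_X {p : R[X]} (hX : ¬X ∣ p)
    (h : Associated p (p.comp (-X))) : ∃ q, expand R 2 q = p :=
  (comp_neg_X_eq_or_eq_neg_of_associated h).elim exists_expand_two_eq_of_comp_neg_X_eq
    fun hneg => absurd (X_dvd_of_comp_neg_X_eq_neg hneg) hX

lemma exists_expand_two_eq_mul_comp_neg_X (p : R[X]) :
    ∃ q, expand R 2 q = p * p.comp (-X) :=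
  exists_expand_two_eq_of_comp_neg_X_eq <| by
    rw [mul_comp_neg_X, comp_neg_X_comp_neg_X, mul_comm]

variable [UniqueFactorizationMonoid R]

lemma exists_dvd_expand_two_and_pow_dvd_of_irreducible {q : R[X]} (hq : Irreducible q)
    (hX : ¬X ∣ q) :
    ∃ h, q ∣ expand R 2 h ∧ ∀ (k : ℕ) (p : R[X]), q ^ k ∣ expand R 2 p → h ^ k ∣ p := by
  by_cases hassoc : Associated q (q.comp (-X))
  · obtain ⟨h, rfl⟩ := exists_expand_two_eq_of_associated_comp_neg_X hX hassoc
    refine ⟨h, dvd_rfl, fun k p hp => ?_⟩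
    rwa [← map_pow, expand_dvd_expand_iff two_ne_zero] at hp
  · obtain ⟨h, hh⟩ := exists_expand_two_eq_mul_comp_neg_X q
    refine ⟨h, hh ▸ dvd_mul_right _ _, fun k p hp => ?_⟩
    have hq' : Irreducible (q.comp (-X)) :=
      (MulEquiv.irreducible_iff (algEquivAevalNegX (R := R))).2 hq
    have hp' : q.comp (-X) ^ k ∣ expand R 2 p := by
      rwa [← pow_comp, ← dvd_comp_neg_X_iff, expand_two_comp_neg_X]
    have hrel : IsRelPrime q (q.comp (-X)) :=
      hq.isRelPrime_iff_not_dvd.2 fun hdvd => hassoc (hq.associated_of_dvd hq' hdvd)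
    rw [← expand_dvd_expand_iff two_ne_zero, map_pow, hh, mul_pow]
    exact hrel.pow.mul_dvd hp hp'

theorem squarefree_expand_two_iff {p : R[X]} (h0 : p.coeff 0 ≠ 0) :
    Squarefree (expand R 2 p) ↔ Squarefree p := by
  refine ⟨squarefree_of_squarefree_expand two_ne_zero, fun hp => ?_⟩
  have hX : ¬X ∣ expand R 2 p := by simpa [X_dvd_iff, coeff_expand] using h0
  rw [squarefree_iff_no_irreducibles fun h => hX (by simp [h])]
  intro q hq hqq
  obtain ⟨h, hqh, hpow⟩ := exists_dvd_expand_two_and_pow_dvd_of_irreducible hq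
    fun hXq => hX (hXq.trans (dvd_of_mul_left_dvd hqq))
  have hunit : IsUnit h := hp h (by simpa only [sq] using hpow 2 p (by rwa [sq]))
  exact hq.not_isUnit (isUnit_of_dvd_unit hqh ((isUnit_expand_iff two_ne_zero).2 hunit))

end ExpandTwo

section BlockCharpoly

open Matrix Polynomial

variable {R m n : Type*} [CommRing R] [Fintype m] [DecidableEq m] [Fintype n] [DecidableEq n]

lemma expand_charpoly (k : ℕ) (M : Matrix n n R) :
    expand R k M.charpoly = (scalar n ((X : R[X]) ^ k) - M.map C).det := by
  rw [charpoly, AlgHom.map_det]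
  congr 1
  ext i j : 1
  by_cases hij : i = j <;> simp [hij]

lemma charpoly_fromBlocks_zero_diag_mul_X_pow (A : Matrix m n R) (B : Matrix n m R) :
    (fromBlocks 0 A B 0).charpoly * X ^ Fintype.card m =
      expand R 2 (A * B).charpoly * X ^ Fintype.card n := by
  have hmul : (fromBlocks 0 A B 0).charmatrix * fromBlocks (scalar m X) 0 (B.map C) 1 =
      fromBlocks (scalar m (X ^ 2) - (A * B).map C) (-A.map C) 0 (scalar n X) := by
    simp [charmatrix_fromBlocks, fromBlocks_multiply, sub_eq_add_neg, -scalar_apply,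
      scalar_comm, Commute.all, sq]
  rw [charpoly, expand_charpoly]
  simpa only [det_mul, det_fromBlocks_zero₁₂, det_fromBlocks_zero₂₁, det_one, mul_one,
    scalar_apply, det_diagonal, Finset.prod_const, Finset.card_univ] using congrArg det hmul

lemma charpoly_fromBlocks_zero_diag (A B : Matrix n n R) :
    (fromBlocks 0 A B 0).charpoly = expand R 2 (A * B).charpoly :=
  (isRegular_X_pow _).right (charpoly_fromBlocks_zero_diag_mul_X_pow A B)

lemma coeff_zero_charpoly_ne_zero_iff {M : Matrix n n R} :
    M.charpoly.coeff 0 ≠ 0 ↔ M.det ≠ 0 := by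
  rw [det_eq_sign_charpoly_coeff, Ne, Ne, (isUnit_neg_one.pow _).mul_right_eq_zero]

theorem stmt_3_general [IsDomain R] [UniqueFactorizationMonoid R] [NeZero (2 : R)]
    (A B : Matrix n n R) (hAB : (A * B).det ≠ 0) :
    Squarefree (fromBlocks 0 A B 0).charpoly ↔ Squarefree (A * B).charpoly := by
  rw [charpoly_fromBlocks_zero_diag,
    squarefree_expand_two_iff (coeff_zero_charpoly_ne_zero_iff.2 hAB)]

end BlockCharpoly

/-- For `g ∈ GL_N(F)` and `θ(g) = (g⁻¹)ᵀ`, the characteristic polynomial of the block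
matrix `[[0, g],[θ(g), 0]]` is squarefree if and only if the characteristic polynomial of
`g * θ(g)` is squarefree. -/
theorem stmt_3 {F : Type*} [Field F] [CharZero F] {N : ℕ} (hN : 1 ≤ N)
    (g : GL (Fin N) F) :
    Squarefree (Matrix.fromBlocks 0 (g : Matrix (Fin N) (Fin N) F)
        (((g⁻¹ : GL (Fin N) F) : Matrix (Fin N) (Fin N) F)ᵀ) 0).charpoly ↔
    Squarefree ((g : Matrix (Fin N) (Fin N) F) *
        ((g⁻¹ : GL (Fin N) F) : Matrix (Fin N) (Fin N) F)ᵀ).charpoly :=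
  stmt_3_general _ _ <| by
    rw [Matrix.det_mul, Matrix.det_transpose, ← Matrix.det_mul, Units.mul_inv, Matrix.det_one]
    exact one_ne_zero
end

section
/- Let F be a nontrivially normed field (a field with a multiplicative norm admitting an element x with |x| > 1), γ ∈ M_n(F) a diagonal matrix, and N ∈ M_n(F) a nilpotent matrix commuting with γ. Then γ lies in the topological closure of the conjugation orbit {g(γ + N)g⁻¹ : g ∈ GL_n(F)} in M_n(F). -/
/-!
Let `S` be semisimple and `N` nilpotent with `S N = N S`. The kernel of `N` is `S`-stable, so it is
the image of an idempotent `P` commuting with `S`. Conjugating `S + N` by `t P + (1 - P)` gives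
`S + (t P + (1 - P)) N`, because `N P = 0`, and letting `t → 0` shows that `S + (1 - P) N` lies in
the closure of the orbit of `S + N`. Since `(1 - P) N` again commutes with `S` and has smaller
nilpotency index, `S` itself is reached after finitely many such degenerations. A diagonal matrix
is semisimple because its eigenspaces span.
-/

open Module

section Semisimple

variable {R M : Type*} [CommRing R] [AddCommGroup M] [Module R M]

theorem isSemisimple_of_iSup_eq_top {κ : Type*} {f : End R M} {p : κ → Submodule R M}
    (hinv : ∀ i, p i ∈ f.invtSubmodule)
    (hp : ∀ i, End.IsSemisimple (LinearMap.restrict f (hinv i))) (htop : ⨆ i, p i = ⊤) :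
    f.IsSemisimple := by
  let e := AEval.mapSubmodule R M f
  have hsup : ⨆ i, e ⟨p i, hinv i⟩ = ⊤ := by
    have hle : ⨆ i, p i ≤ e.symm (⨆ i, e ⟨p i, hinv i⟩) :=
      iSup_le fun i => e.le_symm_apply.mpr (le_iSup (fun i => e ⟨p i, hinv i⟩) i)
    rw [htop] at hle
    exact (map_eq_top_iff e.symm).mp (Subtype.ext (top_le_iff.mp hle))
  exact isSemisimpleModule_of_isSemisimpleModule_submodule' (fun i =>
    (AEval.restrict_equiv_mapSubmodule f _ (hinv i)).isSemisimpleModule_iff.mp (hp i)) hsup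

theorem isSemisimple_of_iSup_eigenspace_eq_top [IsSemisimpleModule R M] {f : End R M}
    (hf : ⨆ μ, f.eigenspace μ = ⊤) : f.IsSemisimple := by
  have hinv (μ : R) : ∀ x ∈ f.eigenspace μ, f x ∈ f.eigenspace μ :=
    End.eigenspace_mem_invtSubmodule f μ
  refine isSemisimple_of_iSup_eq_top hinv (fun μ => ?_) hf
  have hscalar : LinearMap.restrict f (hinv μ) - algebraMap R (End R (f.eigenspace μ)) μ = 0 := by
    ext x
    simpa [sub_eq_zero] using End.mem_eigenspace_iff.mp x.2
  rw [← End.isSemisimple_sub_algebraMap_iff (μ := μ), hscalar]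
  exact End.isSemisimple_zero

theorem exists_isIdempotentElem_commute_mul_eq_zero_iff {f g : End R M} (hf : f.IsSemisimple)
    (hgf : Commute g f) :
    ∃ p : End R M, IsIdempotentElem p ∧ Commute p f ∧ ∀ x : End R M, g * x = 0 ↔ p * x = x := by
  have hker : LinearMap.ker g ∈ f.invtSubmodule := fun x hx => by
    rw [Submodule.mem_comap, LinearMap.mem_ker, ← End.mul_apply, hgf.eq, End.mul_apply,
      LinearMap.mem_ker.mp hx, map_zero]
  obtain ⟨q, hq, hcompl⟩ := End.isSemisimple_iff.mp hf _ hker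
  have hidem := Submodule.isIdempotentElem_projection hcompl
  refine ⟨(LinearMap.ker g).projection q hcompl, hidem, ?_, fun x => ?_⟩
  · rw [LinearMap.IsIdempotentElem.commute_iff hidem, Submodule.range_projection,
      Submodule.ker_projection]
    exact ⟨hker, hq⟩
  · rw [End.mul_eq_comp, End.mul_eq_comp, ← LinearMap.range_le_ker_iff,
      LinearMap.IsIdempotentElem.comp_eq_right_iff hidem, Submodule.range_projection]

variable {ι : Type*} [Fintype ι] [DecidableEq ι]

theorem isSemisimple_toLin'_diagonal [IsSemisimpleRing R] (d : ι → R) :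
    End.IsSemisimple (Matrix.toLin' (Matrix.diagonal d)) :=
  isSemisimple_of_iSup_eigenspace_eq_top (Matrix.iSup_eigenspace_toLin'_diagonal_eq_top d)

theorem exists_matrix_isIdempotentElem_commute_mul_eq_zero_iff {S N : Matrix ι ι R}
    (hS : End.IsSemisimple (Matrix.toLin' S)) (hNS : Commute N S) :
    ∃ P : Matrix ι ι R, IsIdempotentElem P ∧ Commute P S ∧
      ∀ X : Matrix ι ι R, N * X = 0 ↔ P * X = X := by
  let e : Matrix ι ι R ≃ₐ[R] End R (ι → R) := Matrix.toLinAlgEquiv'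
  obtain ⟨p, hp, hpS, hker⟩ :=
    exists_isIdempotentElem_commute_mul_eq_zero_iff (f := e S) hS (hNS.map e)
  refine ⟨e.symm p, hp.map e.symm, by simpa using hpS.map e.symm, fun X => ?_⟩
  rw [← e.injective.eq_iff, map_mul, map_zero, hker, ← e.injective.eq_iff (a := _ * X), map_mul,
    e.apply_symm_apply]

end Semisimple

section Degeneration

theorem one_sub_mul_pow_succ {A : Type*} [Ring A] {n p : A} (hnp : n * p = 0) (k : ℕ) :
    ((1 - p) * n) ^ (k + 1) = (1 - p) * n ^ (k + 1) := by
  have hn : n * (1 - p) = n := by rw [mul_sub, hnp, mul_one, sub_zero]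
  rw [pow_succ, ← mul_assoc, mul_pow_mul, hn, mul_assoc, pow_succ]

theorem isConj_add_unit_mul {A : Type*} [Semiring A] {s n : A} (u : Aˣ) (hs : Commute (u : A) s)
    (hn : n * u = n) : IsConj (s + n) (s + u * n) :=
  ⟨u, show u * (s + n) = (s + u * n) * u by rw [mul_add, add_mul, mul_assoc, hn, hs.eq]⟩

theorem conjugatesOf_eq_setOf_units {A : Type*} [Monoid A] (a : A) :
    conjugatesOf a = {b | ∃ u : Aˣ, b = u * a * (u⁻¹ : Aˣ)} := by
  ext b
  exact exists_congr fun u => by rw [Units.eq_mul_inv_iff_mul_eq, SemiconjBy, eq_comm]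

theorem closure_conjugatesOf_subset {A : Type*} [Monoid A] [TopologicalSpace A] [ContinuousMul A]
    {a b : A} (hb : b ∈ closure (conjugatesOf a)) :
    closure (conjugatesOf b) ⊆ closure (conjugatesOf a) := by
  refine closure_minimal ?_ isClosed_closure
  rw [conjugatesOf_eq_setOf_units b]
  rintro _ ⟨u, rfl⟩
  exact map_mem_closure (f := fun c : A => u * c * (u⁻¹ : Aˣ)) (by fun_prop) hb fun c hc =>
    hc.trans ⟨u, u.mk_semiconjBy c⟩

variable {R A : Type*} [CommRing R] [Ring A] [Algebra R A]

theorem isUnit_smul_add_one_sub {p : A} (hp : IsIdempotentElem p) {t : R} (ht : IsUnit t) :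
    IsUnit (t • p + (1 - p)) := by
  have hmul {a b : R} (hab : a * b = 1) : (a • p + (1 - p)) * (b • p + (1 - p)) = 1 := by
    simp [mul_add, add_mul, mul_sub, sub_mul, smul_smul, hp.eq, hab, mul_comm b a]
  obtain ⟨s, hts, hst⟩ := isUnit_iff_exists.mp ht
  exact isUnit_iff_exists.mpr ⟨s • p + (1 - p), hmul hts, hmul hst⟩

variable [TopologicalSpace R] [TopologicalSpace A] [IsTopologicalRing A] [ContinuousSMul R A]

theorem add_one_sub_mul_mem_closure_conjugatesOf (h0 : (0 : R) ∈ closure {t | IsUnit t})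
    {s n p : A} (hp : IsIdempotentElem p) (hps : Commute p s) (hnp : n * p = 0) :
    s + (1 - p) * n ∈ closure (conjugatesOf (s + n)) := by
  suffices s + ((0 : R) • p + (1 - p)) * n ∈ closure (conjugatesOf (s + n)) by simpa using this
  refine map_mem_closure (f := fun t : R => s + (t • p + (1 - p)) * n) (by fun_prop) h0 ?_
  intro t ht
  obtain ⟨u, hu⟩ := isUnit_smul_add_one_sub hp ht
  change s + (t • p + (1 - p)) * n ∈ _
  rw [← hu]
  refine isConj_add_unit_mul u ?_ ?_ <;> rw [hu]
  · exact (hps.smul_left t).add_left ((Commute.one_left s).sub_left hps)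
  · simp [mul_add, mul_sub, hnp]

-- The last clause of `hs` says that `p` projects onto the kernel of `m`.
theorem mem_closure_conjugatesOf_add_of_isNilpotent (h0 : (0 : R) ∈ closure {t | IsUnit t})
    {s n : A}
    (hs : ∀ m : A, Commute m s →
      ∃ p : A, IsIdempotentElem p ∧ Commute p s ∧ ∀ x : A, m * x = 0 ↔ p * x = x)
    (hn : IsNilpotent n) (hns : Commute n s) : s ∈ closure (conjugatesOf (s + n)) := by
  obtain ⟨k, hk⟩ := hn
  replace hk : n ^ (k + 1) = 0 := pow_eq_zero_of_le k.le_succ hk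
  induction k generalizing n with
  | zero =>
    rw [zero_add, pow_one] at hk
    rw [hk, add_zero]
    exact subset_closure mem_conjugatesOf_self
  | succ k ih =>
    obtain ⟨p, hp, hps, hker⟩ := hs n hns
    have hnp : n * p = 0 := (hker p).mpr hp
    have hpow : ((1 - p) * n) ^ (k + 1) = 0 := by
      have hpn : p * n ^ (k + 1) = n ^ (k + 1) := (hker _).mp (by rw [← pow_succ', hk])
      rw [one_sub_mul_pow_succ hnp, sub_mul, one_mul, hpn, sub_self]
    have hcomm : Commute ((1 - p) * n) s := ((Commute.one_left s).sub_left hps).mul_left hns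
    exact closure_conjugatesOf_subset (add_one_sub_mul_mem_closure_conjugatesOf h0 hp hps hnp)
      (ih hcomm hpow)

end Degeneration

theorem stmt_9_general {R ι : Type*} [CommRing R] [TopologicalSpace R] [IsTopologicalRing R]
    [Fintype ι] [DecidableEq ι] (h0 : (0 : R) ∈ closure {t | IsUnit t}) {S N : Matrix ι ι R}
    (hS : End.IsSemisimple (Matrix.toLin' S)) (hN : IsNilpotent N) (hNS : Commute N S) :
    S ∈ closure (conjugatesOf (S + N)) :=
  mem_closure_conjugatesOf_add_of_isNilpotent h0
    (fun _ hm => exists_matrix_isIdempotentElem_commute_mul_eq_zero_iff hS hm) hN hNS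

/-- Over a nontrivially normed field, if `γ` is a diagonal matrix and `N` is a nilpotent
matrix commuting with `γ`, then `γ` lies in the closure of the conjugation orbit of
`γ + N`. -/
theorem stmt_9 {F : Type*} [NontriviallyNormedField F] {n : ℕ}
    (d : Fin n → F) (N : Matrix (Fin n) (Fin n) F) (hN : IsNilpotent N)
    (hcomm : N * Matrix.diagonal d = Matrix.diagonal d * N) :
    Matrix.diagonal d ∈ closure
      {X : Matrix (Fin n) (Fin n) F | ∃ g : GL (Fin n) F,
        X = (g : Matrix (Fin n) (Fin n) F) * (Matrix.diagonal d + N) *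
          ((g⁻¹ : GL (Fin n) F) : Matrix (Fin n) (Fin n) F)} := by
  rw [← conjugatesOf_eq_setOf_units]
  exact stmt_9_general (mem_closure_iff_nhdsWithin_neBot.mpr inferInstance)
    (isSemisimple_toLin'_diagonal d) hN hcomm
end

section
/- Let F be a nontrivially normed field of characteristic zero, γ ∈ M_n(F) a matrix that is diagonalizable over F, M = {g ∈ GL_n(F) : gγ = γg} its centralizer in GL_n(F), and 𝔪 = {Y ∈ M_n(F) : Yγ = γY} its centralizer algebra. Then the assignment sending the M-conjugacy class of a nilpotent element ξ ∈ 𝔪 to the GL_n(F)-conjugacy orbit of γ + ξ is a bijection from the set of M-conjugacy classes of nilpotent elements of 𝔪 onto the set 𝒪(γ) of GL_n(F)-conjugation orbits 𝒪 in M_n(F) whose topological closure contains γ. In particular, 𝒪(γ) is finite. -/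
/-- The conjugation orbit of a matrix `X` under `GL_n(F)`. -/
def conjOrbit {F : Type*} [Field F] {n : ℕ} (X : Matrix (Fin n) (Fin n) F) :
    Set (Matrix (Fin n) (Fin n) F) :=
  {Y | ∃ g : GL (Fin n) F,
    Y = (g : Matrix (Fin n) (Fin n) F) * X * ((g⁻¹ : GL (Fin n) F) : Matrix (Fin n) (Fin n) F)}

/-!
Over `F`, a matrix with split characteristic polynomial is conjugate to a Jordan matrix `D + N`.
Conjugating `D + N` by `diag(t ^ w i)`, where `w` increases along the Jordan chains, multiplies the
entries of `N` by positive powers of `t`; letting `t → 0` puts `D` in the closure of the orbit.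
Conversely the characteristic polynomial is constant on closures of orbits, so if `γ` lies in the
closure of the orbit of `D + N`, then `D` and `γ` are diagonalizable with the same characteristic
polynomial, hence conjugate. Injectivity is the uniqueness of the Jordan decomposition: the
diagonalizable part of `γ + ξ` is determined by its generalized eigenspaces. Finiteness holds
because there are finitely many Jordan matrices with given eigenvalues.
-/

open Polynomial Matrix MulAction Module
open scoped DirectSum Topology

section JordanForm

universe u v

variable {K : Type u} [Field K]

/-- The Jordan block of size `e` with eigenvalue `a`, with its ones below the diagonal. -/
def jordanBlock {R : Type*} [AddMonoidWithOne R] (a : R) (e : ℕ) : Matrix (Fin e) (Fin e) R :=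
  diagonal (fun _ => a) + of fun i j : Fin e => if (i : ℕ) = j + 1 then 1 else 0

theorem exists_basis_quotient_X_sub_C_pow (a : K) (e : ℕ) :
    ∃ b : Basis (Fin e) K (K[X] ⧸ Ideal.span {(X - C a) ^ e}),
      ∀ k, b k = Ideal.Quotient.mk _ ((X - C a) ^ (k : ℕ)) := by
  have hmonic : ((X - C a) ^ e).Monic := (monic_X_sub_C a).pow e
  let y : K[X] ⧸ Ideal.span {(X - C a) ^ e} := Ideal.Quotient.mk _ (X - C a)
  have hmin : minpoly K (AdjoinRoot.root ((X - C a) ^ e) - algebraMap K _ a) = X ^ e := by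
    rw [minpoly.sub_algebraMap, AdjoinRoot.minpoly_root hmonic.ne_zero, hmonic.leadingCoeff]
    simp
  replace hmin : minpoly K y = X ^ e := hmin
  have hli : LinearIndependent K fun k : Fin e => y ^ (k : ℕ) := by
    have := linearIndependent_pow (K := K) y
    rwa [hmin, natDegree_X_pow] at this
  have hrank : Fintype.card (Fin e) = finrank K (K[X] ⧸ Ideal.span {(X - C a) ^ e}) := by
    simp [finrank_quotient_span_eq_natDegree]
  have : Module.Finite K (K[X] ⧸ Ideal.span {(X - C a) ^ e}) := hmonic.finite_quotient
  exact ⟨basisOfLinearIndependentOfCardEqFinrank' _ hli hrank, fun k => by simp [y]⟩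

theorem exists_toMatrix_lsmul_X_eq_jordanBlock (a : K) (e : ℕ) :
    ∃ b : Basis (Fin e) K (K[X] ⧸ Ideal.span {(X - C a) ^ e}),
      LinearMap.toMatrix b b (Algebra.lsmul K K _ (X : K[X])) = jordanBlock a e := by
  obtain ⟨b, hb⟩ := exists_basis_quotient_X_sub_C_pow a e
  let y (k : ℕ) : K[X] ⧸ Ideal.span {(X - C a) ^ e} := Ideal.Quotient.mk _ ((X - C a) ^ k)
  have hX (k : ℕ) : (X : K[X]) • y k = a • y k + y (k + 1) := by
    have : X * (X - C a) ^ k = C a * (X - C a) ^ k + (X - C a) ^ (k + 1) := by ring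
    rw [← smul_eq_C_mul] at this
    exact congrArg (Ideal.Quotient.mk _) this
  have hy (k : ℕ) (hk : e ≤ k) : y k = 0 :=
    Ideal.Quotient.eq_zero_iff_mem.2 (Ideal.mem_span_singleton.2 (pow_dvd_pow _ hk))
  have hshift (k : ℕ) : ∑ i : Fin e, (if (i : ℕ) = k + 1 then 1 else 0 : K) • b i = y (k + 1) := by
    simp only [hb, ite_smul, one_smul, zero_smul]
    rw [Fin.sum_univ_eq_sum_range fun i => if i = k + 1 then y i else 0]
    simpa using fun h => (hy _ h).symm
  refine ⟨b, (toLin b b).injective (b.ext fun k => ?_)⟩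
  rw [toLin_toMatrix, jordanBlock, map_add, LinearMap.add_apply, toLin_self, toLin_self]
  simp only [of_apply, hshift]
  simp only [diagonal_apply, ite_smul, zero_smul, Finset.sum_ite_eq',
    Finset.mem_univ, if_true, Algebra.lsmul_coe]
  rw [hb]
  exact hX k

theorem exists_span_pow_eq_span_X_sub_C_pow {p q : K[X]} (hp : Irreducible p) (hq : q ≠ 0)
    (hs : q.Splits) {e : ℕ} (hpq : p ^ e ∣ q) :
    ∃ a, Ideal.span {p ^ e} = Ideal.span {(X - C a) ^ e} := by
  obtain rfl | he := eq_or_ne e 0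
  · exact ⟨0, by simp only [pow_zero]⟩
  have hpd : p ∣ q := (dvd_pow_self p he).trans hpq
  obtain ⟨a, ha⟩ := exists_root_of_degree_eq_one
    ((hs.of_dvd hq hpd).degree_eq_one_of_irreducible hp)
  have hassoc : Associated (X - C a) p :=
    (irreducible_X_sub_C a).associated_of_dvd hp (dvd_iff_isRoot.2 ha)
  exact ⟨a, Ideal.span_singleton_eq_span_singleton.2 hassoc.symm.pow_pow⟩

theorem toMatrix_basis_lsmul_eq_blockDiagonal' {R A κ : Type*} {η : κ → Type*} {M : κ → Type*}
    [CommSemiring R] [Semiring A] [Algebra R A] [∀ i, AddCommMonoid (M i)] [∀ i, Module R (M i)]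
    [∀ i, Module A (M i)] [∀ i, IsScalarTower R A (M i)] [DecidableEq κ] [Fintype κ]
    [∀ i, Fintype (η i)] [∀ i, DecidableEq (η i)] (b : ∀ i, Basis (η i) R (M i)) (x : A) :
    LinearMap.toMatrix (DFinsupp.basis b) (DFinsupp.basis b) (Algebra.lsmul R R (⨁ i, M i) x) =
      blockDiagonal' fun i => LinearMap.toMatrix (b i) (b i) (Algebra.lsmul R R (M i) x) := by
  ext ⟨i, k⟩ ⟨j, l⟩
  have hb : DFinsupp.basis b ⟨j, l⟩ = DFinsupp.single j (b j l) := by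
    classical
    simp [DFinsupp.basis]
  rw [LinearMap.toMatrix_apply, hb]
  change (b i).repr ((x • DFinsupp.single j (b j l) : Π₀ i, M i) i) k = _
  rw [DFinsupp.smul_apply]
  obtain rfl | h := eq_or_ne i j
  · rw [DFinsupp.single_eq_same, blockDiagonal'_apply_eq, LinearMap.toMatrix_apply]; rfl
  · rw [DFinsupp.single_eq_of_ne h, blockDiagonal'_apply_ne _ _ _ h]; simp

theorem exists_aeval_equiv_directSum_of_splits {V : Type v} [AddCommGroup V] [Module K V]
    [FiniteDimensional K V] (f : End K V) (hf : (minpoly K f).Splits) :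
    ∃ (κ : Type u) (_ : Fintype κ) (a : κ → K) (e : κ → ℕ),
      Nonempty (AEval K V f ≃ₗ[K[X]] ⨁ i, K[X] ⧸ Ideal.span {(X - C (a i)) ^ e i}) := by
  classical
  obtain ⟨κ, _, p, hp, e, ⟨φ⟩⟩ := equiv_directSum_of_isTorsion
    (AEval.isTorsion_of_finiteDimensional K V f)
  have hann (x : AEval K V f) : minpoly K f • x = 0 := by
    obtain ⟨v, rfl⟩ := (AEval.of K V f).surjective x
    rw [← AEval.of_aeval_smul, minpoly.aeval, zero_smul, map_zero]
  have hdvd (i : κ) : p i ^ e i ∣ minpoly K f := by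
    have h := congrArg φ (hann (φ.symm (DirectSum.lof K[X] κ _ i 1)))
    rw [map_smul, φ.apply_symm_apply, ← map_smul, map_zero] at h
    have hone := (map_eq_zero_iff _ (DirectSum.of_injective i)).1 h
    rw [← Ideal.mem_span_singleton, ← Ideal.Quotient.eq_zero_iff_mem]
    simpa [Algebra.smul_def] using hone
  choose a ha using fun i => exists_span_pow_eq_span_X_sub_C_pow (hp i)
    (minpoly.ne_zero (Algebra.IsIntegral.isIntegral f)) hf (hdvd i)
  exact ⟨κ, ‹_›, a, e, ⟨φ.trans <|
    DFinsupp.mapRange.linearEquiv fun i => Submodule.quotEquivOfEq _ _ (ha i)⟩⟩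

theorem exists_toMatrix_eq_blockDiagonal'_jordanBlock {V : Type v} [AddCommGroup V] [Module K V]
    [FiniteDimensional K V] (f : End K V) (hf : (minpoly K f).Splits) :
    ∃ (κ : Type u) (_ : Fintype κ) (_ : DecidableEq κ) (a : κ → K) (e : κ → ℕ)
      (b : Basis (Σ i, Fin (e i)) K V),
      LinearMap.toMatrix b b f = blockDiagonal' fun i => jordanBlock (a i) (e i) := by
  classical
  obtain ⟨κ, _, a, e, ⟨φ⟩⟩ := exists_aeval_equiv_directSum_of_splits f hf
  choose b hb using fun i => exists_toMatrix_lsmul_X_eq_jordanBlock (a i) (e i)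
  let ψ := (φ.symm.restrictScalars K).trans (AEval.of K V f).symm
  refine ⟨κ, ‹_›, inferInstance, a, e, (DFinsupp.basis b).map ψ, ?_⟩
  simp only [← hb, ← toMatrix_basis_lsmul_eq_blockDiagonal']
  have hψ : ψ.symm.conj f = Algebra.lsmul K K _ (X : K[X]) := by
    refine LinearMap.ext fun x => ?_
    rw [LinearEquiv.conj_apply_apply, LinearEquiv.symm_symm, LinearEquiv.symm_apply_eq]
    simp only [ψ, LinearEquiv.trans_apply, LinearEquiv.restrictScalars_apply, Algebra.lsmul_coe,
      map_smul, AEval.of_symm_X_smul]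
    rfl
  rw [← hψ]
  ext r s
  simp [LinearMap.toMatrix_apply, LinearEquiv.conj_apply]

theorem toMatrix_mem_orbit_toMatrix {R ι V : Type*} [CommRing R] [Fintype ι] [DecidableEq ι]
    [AddCommGroup V] [Module R V] (b b' : Basis ι R V) (f : End R V) :
    LinearMap.toMatrix b b f ∈ orbit (ConjAct (GL ι R)) (LinearMap.toMatrix b' b' f) := by
  refine ⟨ConjAct.toConjAct ⟨b.toMatrix b', b'.toMatrix b, b.toMatrix_mul_toMatrix_flip b',
    b'.toMatrix_mul_toMatrix_flip b⟩, ?_⟩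
  exact basis_toMatrix_mul_linearMap_toMatrix_mul_basis_toMatrix b b' b b' f

/-- The eigenvalues `d` and the nilpotent part `N` of a matrix in Jordan normal form. The index
type carries no order: the chains of the Jordan form are recorded by a weight on the index type
that `N` raises. -/
structure IsJordanPair {R ι : Type*} [Zero R] [One R] (d : ι → R) (N : Matrix ι ι R) : Prop where
  eq_zero_or_one : ∀ i j, N i j = 0 ∨ N i j = 1
  diag_eq : ∀ i j, N i j ≠ 0 → d i = d j
  exists_weight : ∃ w : ι → ℕ, ∀ i j, N i j ≠ 0 → w j < w i

theorem exists_isJordanPair_blockDiagonal'_jordanBlock {R κ : Type*} [AddMonoidWithOne R]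
    [DecidableEq κ] (a : κ → R) (e : κ → ℕ) :
    ∃ d N, IsJordanPair d N ∧
      blockDiagonal' (fun i => jordanBlock (a i) (e i)) = diagonal d + N := by
  let N : Matrix (Σ i, Fin (e i)) (Σ i, Fin (e i)) R :=
    of fun r s => if r.1 = s.1 ∧ (r.2 : ℕ) = s.2 + 1 then 1 else 0
  have hN (r s) (h : N r s ≠ 0) : r.1 = s.1 ∧ (r.2 : ℕ) = s.2 + 1 :=
    (ite_ne_right_iff.1 h).1
  refine ⟨fun r => a r.1, N, ⟨fun r s => (ite_eq_or_eq _ _ _).symm,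
    fun r s h => congrArg a (hN r s h).1, fun r => r.2, fun r s h => ?_⟩, ?_⟩
  · exact Nat.lt_of_succ_le (hN r s h).2.ge
  ext ⟨i, k⟩ ⟨j, l⟩
  obtain rfl | h := eq_or_ne i j
  · simp [jordanBlock, diagonal_apply, N]
  · simp [blockDiagonal'_apply_ne _ _ _ h, h, N]

theorem IsJordanPair.submatrix {R ι ι' : Type*} [Zero R] [One R] {d : ι → R} {N : Matrix ι ι R}
    (h : IsJordanPair d N) (σ : ι' → ι) : IsJordanPair (d ∘ σ) (N.submatrix σ σ) where
  eq_zero_or_one i j := h.eq_zero_or_one (σ i) (σ j)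
  diag_eq i j := h.diag_eq (σ i) (σ j)
  exists_weight :=
    let ⟨w, hw⟩ := h.exists_weight
    ⟨w ∘ σ, fun i j => hw (σ i) (σ j)⟩

theorem exists_isJordanPair_mem_orbit {ι : Type*} [Fintype ι] [DecidableEq ι] (A : Matrix ι ι K)
    (hA : (minpoly K A).Splits) :
    ∃ d N, IsJordanPair d N ∧ A ∈ orbit (ConjAct (GL ι K)) (diagonal d + N) := by
  rw [← minpoly_toLin'] at hA
  obtain ⟨κ, _, _, a, e, b, hb⟩ := exists_toMatrix_eq_blockDiagonal'_jordanBlock (toLin' A) hA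
  obtain ⟨d, N, h, hdN⟩ := exists_isJordanPair_blockDiagonal'_jordanBlock a e
  let σ : (Σ i, Fin (e i)) ≃ ι := b.indexEquiv (Pi.basisFun K ι)
  refine ⟨d ∘ σ.symm, N.submatrix σ.symm σ.symm, h.submatrix σ.symm, ?_⟩
  have hσ : LinearMap.toMatrix (b.reindex σ) (b.reindex σ) (toLin' A) =
      diagonal (d ∘ σ.symm) + N.submatrix σ.symm σ.symm := by
    rw [← submatrix_diagonal_equiv]
    change _ = (diagonal d + N).submatrix σ.symm σ.symm
    rw [← hdN, ← hb]
    ext i j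
    simp [LinearMap.toMatrix_apply]
  have hA' := toMatrix_mem_orbit_toMatrix (Pi.basisFun K ι) (b.reindex σ) (toLin' A)
  rwa [hσ, LinearMap.toMatrix_eq_toMatrix', LinearMap.toMatrix'_toLin'] at hA'

end JordanForm

section Eigenbasis

theorem maxGenEigenspace_le_maxGenEigenspace_add {R M : Type*} [CommRing R] [AddCommGroup M]
    [Module R M] {f g : End R M} (h : Commute f g) (hg : IsNilpotent g) (μ : R) :
    f.maxGenEigenspace μ ≤ (f + g).maxGenEigenspace μ := by
  intro x hx
  obtain ⟨k, hk⟩ := (f.mem_maxGenEigenspace μ x).1 hx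
  obtain ⟨l, hl⟩ := hg
  have hcomm : Commute (f - μ • 1) g := h.sub_left ((Commute.one_left g).smul_left μ)
  rw [End.mem_maxGenEigenspace, add_sub_right_comm]
  exact ⟨k + l - 1, (Ideal.torsionOf (End R M) M x).add_pow_add_pred_mem_of_pow_mem_of_commute
    (m := k) (n := l) hk (hl ▸ Ideal.zero_mem _) hcomm⟩

theorem splits_minpoly_of_basis_mem_maxGenEigenspace {K V ι : Type*} [Field K] [AddCommGroup V]
    [Module K V] [Finite ι] {f : End K V} (b : Basis ι K V) (d : ι → K)
    (hb : ∀ i, b i ∈ f.maxGenEigenspace (d i)) : (minpoly K f).Splits := by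
  cases nonempty_fintype ι
  choose k hk using fun i => (f.mem_maxGenEigenspace _ _).1 (hb i)
  have hsplits : (∏ i, (X - C (d i)) ^ k i).Splits :=
    .prod fun i _ => (Splits.X_sub_C _).pow _
  have hmonic : (∏ i, (X - C (d i)) ^ k i).Monic :=
    monic_prod_of_monic _ _ fun i _ => (monic_X_sub_C _).pow _
  refine hsplits.of_dvd hmonic.ne_zero (minpoly.dvd K f (b.ext fun i => ?_))
  obtain ⟨q, hq⟩ := Finset.dvd_prod_of_mem (fun i => (X - C (d i)) ^ k i) (Finset.mem_univ i)
  rw [hq, mul_comm, map_mul, map_pow, map_sub, aeval_X, aeval_C, Algebra.algebraMap_eq_smul_one,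
    End.mul_apply, hk, map_zero, LinearMap.zero_apply]

variable {R V ι : Type*} [CommRing R] [AddCommGroup V] [Module R V] [Fintype ι] [DecidableEq ι]

theorem toLin_diagonal_eq_of_add_nilpotent_eq [IsDomain R] {b b' : Basis ι R V} {d d' : ι → R}
    {g g' : End R V} (hg : IsNilpotent g) (hg' : IsNilpotent g')
    (hc : Commute (toLin b b (diagonal d)) g) (hc' : Commute (toLin b' b' (diagonal d')) g')
    (h : toLin b b (diagonal d) + g = toLin b' b' (diagonal d') + g') :
    toLin b b (diagonal d) = toLin b' b' (diagonal d') := by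
  have hle (μ : R) : End.maxGenEigenspace (toLin b b (diagonal d)) μ ≤
      End.eigenspace (toLin b' b' (diagonal d')) μ := by
    calc
      _ ≤ End.maxGenEigenspace (toLin b' b' (diagonal d') + g') μ :=
        h ▸ maxGenEigenspace_le_maxGenEigenspace_add hc hg μ
      _ ≤ End.maxGenEigenspace (toLin b' b' (diagonal d') + g' + -g') μ :=
        maxGenEigenspace_le_maxGenEigenspace_add (hc'.add_left (.refl g')).neg_right hg'.neg μ
      _ = _ := by
        rw [add_neg_cancel_right, maxGenEigenspace_toLin_diagonal_eq_eigenspace]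
  refine b.ext fun i => ?_
  have hi := (hasEigenvector_toLin_diagonal d i b).1
  have hi' := hle _ (End.eigenspace_le_maxGenEigenspace hi)
  rw [End.mem_eigenspace_iff.1 hi, End.mem_eigenspace_iff.1 hi']

theorem exists_toLin'_smul_eq_toLin (g : ConjAct (GL ι R)) : 
    ∃ b : Basis ι R (ι → R), ∀ A : Matrix ι ι R, toLin' (g • A) = toLin b b A := by
  let e := toLin'OfInv (ConjAct.ofConjAct g).inv_mul (ConjAct.ofConjAct g).mul_inv
  refine ⟨(Pi.basisFun R ι).map e, fun A => ?_⟩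
  rw [ConjAct.units_smul_def, toLin'_mul, toLin'_mul]
  refine ((Pi.basisFun R ι).map e).ext fun i => ?_
  have hA : toLin' A (Pi.basisFun R ι i) = ∑ j, A j i • Pi.basisFun R ι j :=
    toLin_self (Pi.basisFun R ι) (Pi.basisFun R ι) A i
  rw [toLin_self]
  simp only [Basis.map_apply, LinearMap.comp_apply, ← map_smul, ← map_sum, ← hA]
  exact congrArg (fun x => e (toLin' A x)) (e.symm_apply_apply _)

end Eigenbasis

section Raising

variable {R ι : Type*} [CommRing R] [Fintype ι] [DecidableEq ι]

theorem charpoly_diagonal_add_of_raising {α : Type*} [LinearOrder α] (d : ι → R)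
    {N : Matrix ι ι R} {w : ι → α} (hN : ∀ i j, N i j ≠ 0 → w j < w i) :
    (diagonal d + N).charpoly = ∏ i, (X - C (d i)) := by
  have htri : (diagonal d + N).BlockTriangular (OrderDual.toDual ∘ w) := by
    refine (blockTriangular_diagonal d).add fun i j hij => ?_
    exact not_imp_comm.1 (hN i j) (not_lt_of_gt hij)
  have hblock (a : αᵒᵈ) : (diagonal d + N).toSquareBlock (OrderDual.toDual ∘ w) a =
      diagonal fun i => d i.1 := by
    ext i j
    have hw : w i = w j := OrderDual.toDual.injective (i.2.trans j.2.symm)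
    have hij : N i j = 0 := not_imp_comm.1 (hN i j) hw.not_gt
    simp [toSquareBlock_def, hij, diagonal_apply, Subtype.ext_iff]
  rw [htri.charpoly]
  refine Finset.prod_image' _ fun i _ => ?_
  rw [hblock, charpoly_diagonal]
  exact (Finset.prod_subtype _ (fun _ => Finset.mem_filter_univ _) fun j => X - C (d j)).symm

theorem isNilpotent_of_raising {α : Type*} [LinearOrder α] {N : Matrix ι ι R} {w : ι → α}
    (hN : ∀ i j, N i j ≠ 0 → w j < w i) : IsNilpotent N := by
  have hchar : N.charpoly = X ^ Fintype.card ι := by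
    simpa using charpoly_diagonal_add_of_raising (fun _ => 0) hN
  exact ⟨Fintype.card ι, by simpa [hchar] using N.aeval_self_charpoly⟩

theorem commute_diagonal_of_forall_eq {d : ι → R} {N : Matrix ι ι R}
    (h : ∀ i j, N i j ≠ 0 → d i = d j) : Commute (diagonal d) N := by
  ext i j
  rw [diagonal_mul, mul_diagonal]
  by_cases hij : N i j = 0
  · simp [hij]
  · rw [h i j hij, mul_comm]

end Raising

theorem exists_perm_comp_eq_of_prod_X_sub_C_eq {R ι : Type*} [CommRing R] [IsDomain R]
    [Fintype ι] {d d' : ι → R} (h : ∏ i, (X - C (d i)) = ∏ i, (X - C (d' i))) :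
    ∃ σ : Equiv.Perm ι, d ∘ σ = d' := by
  classical
  have hroots (f : ι → R) : (∏ i, (X - C (f i))).roots = Finset.univ.val.map f := by
    rw [← roots_multiset_prod_X_sub_C (Finset.univ.val.map f), Multiset.map_map]
    rfl
  have hcard (c : R) : Nonempty ({i // d' i = c} ≃ {i // d i = c}) := by
    have hc := congrArg (fun p => p.roots.count c) h
    simp only [hroots, Multiset.count_map, eq_comm (a := c)] at hc
    rw [← Fintype.card_eq, Fintype.card_subtype, Fintype.card_subtype]
    exact hc.symm
  exact ⟨Equiv.ofFiberEquiv fun c => (hcard c).some, funext (Equiv.ofFiberEquiv_map _)⟩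

section Diagonalizable

variable {R K ι : Type*} [CommRing R] [Field K] [Fintype ι] [DecidableEq ι]

theorem charpoly_eq_of_mem_orbit {A B : Matrix ι ι R} (h : A ∈ orbit (ConjAct (GL ι R)) B) :
    A.charpoly = B.charpoly := by
  obtain ⟨g, rfl⟩ := h
  change (g • B).charpoly = _
  rw [ConjAct.units_smul_def, coe_units_inv, charpoly_units_conj]

theorem diagonal_comp_perm_mem_orbit (d : ι → R) (σ : Equiv.Perm ι) :
    diagonal (d ∘ σ) ∈ orbit (ConjAct (GL ι R)) (diagonal d) := by
  have h := toMatrix_mem_orbit_toMatrix ((Pi.basisFun R ι).reindex σ.symm) (Pi.basisFun R ι)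
    (toLin' (diagonal d))
  rw [LinearMap.toMatrix_eq_toMatrix', LinearMap.toMatrix'_toLin'] at h
  convert h using 1
  ext i j
  simp +contextual [LinearMap.toMatrix_apply, diagonal_apply, Pi.single_apply]

theorem splits_charpoly_of_mem_orbit_diagonal {A : Matrix ι ι R} {d : ι → R}
    (h : A ∈ orbit (ConjAct (GL ι R)) (diagonal d)) : A.charpoly.Splits := by
  rw [charpoly_eq_of_mem_orbit h, charpoly_diagonal]
  exact .prod fun _ _ => .X_sub_C _

theorem diagonal_mem_orbit_of_charpoly_eq [IsDomain R] {d d' : ι → R}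
    (h : (diagonal d).charpoly = (diagonal d').charpoly) :
    diagonal d ∈ orbit (ConjAct (GL ι R)) (diagonal d') := by
  rw [charpoly_diagonal, charpoly_diagonal] at h
  obtain ⟨σ, rfl⟩ := exists_perm_comp_eq_of_prod_X_sub_C_eq h.symm
  exact diagonal_comp_perm_mem_orbit d' σ

theorem eq_of_add_nilpotent_eq [IsDomain R] {A A' N N' : Matrix ι ι R} {d d' : ι → R}
    (hA : A ∈ orbit (ConjAct (GL ι R)) (diagonal d))
    (hA' : A' ∈ orbit (ConjAct (GL ι R)) (diagonal d')) (hN : IsNilpotent N)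
    (hN' : IsNilpotent N') (hc : Commute A N) (hc' : Commute A' N') (h : A + N = A' + N') :
    A = A' := by
  obtain ⟨g, rfl⟩ := hA
  obtain ⟨g', rfl⟩ := hA'
  obtain ⟨b, hb⟩ := exists_toLin'_smul_eq_toLin g
  obtain ⟨b', hb'⟩ := exists_toLin'_smul_eq_toLin g'
  have hsum := congrArg toLin' h
  rw [map_add, map_add] at hsum
  apply toLin'.injective
  rw [hb, hb']
  exact toLin_diagonal_eq_of_add_nilpotent_eq (hN.map toLinAlgEquiv') (hN'.map toLinAlgEquiv')
    (hb _ ▸ hc.map toLinAlgEquiv') (hb' _ ▸ hc'.map toLinAlgEquiv')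
    (by rw [← hb, ← hb']; exact hsum)

theorem splits_minpoly_add_of_isNilpotent {γ ξ : Matrix ι ι K} {d : ι → K}
    (hγ : γ ∈ orbit (ConjAct (GL ι K)) (diagonal d)) (hξ : IsNilpotent ξ) (hc : Commute γ ξ) :
    (minpoly K (γ + ξ)).Splits := by
  obtain ⟨g, rfl⟩ := hγ
  obtain ⟨b, hb⟩ := exists_toLin'_smul_eq_toLin g
  rw [← minpoly_toLin']
  refine splits_minpoly_of_basis_mem_maxGenEigenspace b d fun i => ?_
  rw [map_add, hb]
  exact maxGenEigenspace_le_maxGenEigenspace_add (hb _ ▸ hc.map toLinAlgEquiv')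
    (hξ.map toLinAlgEquiv') _
    (End.eigenspace_le_maxGenEigenspace (hasEigenvector_toLin_diagonal d i b).1)

theorem orbit_add_eq_orbit_add_iff [IsDomain R] {γ ξ ξ' : Matrix ι ι R} {d : ι → R}
    (hγ : γ ∈ orbit (ConjAct (GL ι R)) (diagonal d)) (hξ : IsNilpotent ξ) (hξ' : IsNilpotent ξ')
    (hc : Commute γ ξ) (hc' : Commute γ ξ') :
    orbit (ConjAct (GL ι R)) (γ + ξ) = orbit (ConjAct (GL ι R)) (γ + ξ') ↔
      ∃ m : ConjAct (GL ι R), m • γ = γ ∧ m • ξ = ξ' := by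
  constructor
  · intro h
    obtain ⟨m, hm⟩ : γ + ξ' ∈ orbit (ConjAct (GL ι R)) (γ + ξ) := h ▸ mem_orbit_self _
    let φ := MulSemiringAction.toRingHom (ConjAct (GL ι R)) (Matrix ι ι R) m
    have hsum : m • γ + m • ξ = γ + ξ' := by rw [← smul_add]; exact hm
    have hmγ : m • γ = γ :=
      eq_of_add_nilpotent_eq (mem_orbit_of_mem_orbit m hγ) hγ (hξ.map φ) hξ' (hc.map φ) hc'
        hsum
    exact ⟨m, hmγ, by rwa [hmγ, add_right_inj] at hsum⟩
  · rintro ⟨m, hmγ, rfl⟩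
    exact (orbit_eq_iff.2 ⟨m, by simp only [smul_add, hmγ]⟩).symm

theorem diagonal_add_of_pow_mul_mem_orbit (d : ι → K) {N : Matrix ι ι K} {w : ι → ℕ}
    (hN : ∀ i j, N i j ≠ 0 → w j ≤ w i) {t : K} (ht : t ≠ 0) :
    diagonal d + of (fun i j => t ^ (w i - w j) * N i j) ∈
      orbit (ConjAct (GL ι K)) (diagonal d + N) := by
  let g : GL ι K := GeneralLinearGroup.mkOfDetNeZero (diagonal fun i => t ^ w i)
    (by simpa [det_diagonal, Finset.prod_ne_zero_iff] using fun i => pow_ne_zero (w i) ht)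
  have hN' : diagonal (fun i => t ^ w i) * N =
      of (fun i j => t ^ (w i - w j) * N i j) * diagonal fun i => t ^ w i := by
    ext i j
    rw [diagonal_mul, mul_diagonal, of_apply]
    by_cases hij : N i j = 0
    · simp [hij]
    · rw [mul_right_comm, ← pow_add, Nat.sub_add_cancel (hN i j hij)]
  refine ⟨ConjAct.toConjAct g, (Units.mul_inv_eq_iff_eq_mul g).2 ?_⟩
  change diagonal (fun i => t ^ w i) * (diagonal d + N) = (diagonal d + _) * diagonal _
  rw [mul_add, add_mul, hN', (commute_diagonal _ d).eq]

end Diagonalizable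

namespace IsJordanPair

variable {R ι : Type*} [CommRing R] [Fintype ι] [DecidableEq ι] {d : ι → R} {N : Matrix ι ι R}

theorem isNilpotent (h : IsJordanPair d N) : IsNilpotent N :=
  let ⟨_, hw⟩ := h.exists_weight
  isNilpotent_of_raising hw

theorem commute (h : IsJordanPair d N) : Commute (diagonal d) N :=
  commute_diagonal_of_forall_eq h.diag_eq

theorem charpoly_add (h : IsJordanPair d N) : (diagonal d + N).charpoly = ∏ i, (X - C (d i)) :=
  let ⟨_, hw⟩ := h.exists_weight
  charpoly_diagonal_add_of_raising d hw

end IsJordanPair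

theorem finite_setOf_orbit_charpoly_eq {K ι : Type*} [Field K] [Fintype ι] [DecidableEq ι]
    {p : K[X]} (hp : p.Splits) :
    {O | ∃ X : Matrix ι ι K, O = orbit (ConjAct (GL ι K)) X ∧ X.charpoly = p}.Finite := by
  classical
  let D : Set (ι → K) := Set.univ.pi fun _ => p.roots.toFinset
  let E : Set (ι → ι → K) := Set.univ.pi fun _ => Set.univ.pi fun _ => {0, 1}
  have hD : D.Finite := Set.Finite.pi fun _ => Finset.finite_toSet _
  have hE : E.Finite := Set.Finite.pi fun _ => Set.Finite.pi fun _ => Set.toFinite _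
  refine (hD.image2 (fun d N => orbit (ConjAct (GL ι K)) (diagonal d + of N)) hE).subset ?_
  rintro _ ⟨X, rfl, rfl⟩
  obtain ⟨d, N, h, hX⟩ := exists_isJordanPair_mem_orbit X
    (hp.of_dvd X.charpoly_monic.ne_zero X.minpoly_dvd_charpoly)
  refine ⟨d, fun i _ => ?_, N, fun i _ j _ => h.eq_zero_or_one i j, (orbit_eq_iff.2 hX).symm⟩
  rw [charpoly_eq_of_mem_orbit hX, h.charpoly_add]
  rw [Finset.mem_coe, Multiset.mem_toFinset, mem_roots (monic_prod_X_sub_C _ _).ne_zero,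
    IsRoot, eval_prod]
  exact Finset.prod_eq_zero (Finset.mem_univ i) (by simp)

section OrbitClosure

variable {F ι : Type*} [Field F] [TopologicalSpace F] [IsTopologicalRing F] [Fintype ι]
  [DecidableEq ι]

theorem diagonal_mem_closure_orbit [(𝓝[≠] (0 : F)).NeBot] (d : ι → F) {N : Matrix ι ι F}
    {w : ι → ℕ} (hN : ∀ i j, N i j ≠ 0 → w j < w i) :
    diagonal d ∈ closure (orbit (ConjAct (GL ι F)) (diagonal d + N)) := by
  let c (t : F) : Matrix ι ι F := diagonal d + of fun i j => t ^ (w i - w j) * N i j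
  have hc : Continuous c := by fun_prop
  have h0 : c 0 = diagonal d := by
    ext i j
    by_cases hij : N i j = 0
    · simp [c, hij]
    · simp [c, (Nat.sub_pos_of_lt (hN i j hij)).ne']
  have hmem : c 0 ∈ closure (orbit (ConjAct (GL ι F)) (diagonal d + N)) :=
    map_mem_closure hc (dense_compl_singleton (0 : F) 0) fun t ht =>
      diagonal_add_of_pow_mul_mem_orbit d (fun i j h => (hN i j h).le) ht
  rwa [h0] at hmem

theorem charpoly_eq_of_mem_closure_orbit {R : Type*} [CommRing R] [IsDomain R] [Infinite R]
    [TopologicalSpace R] [IsTopologicalRing R] [T2Space R] {A B : Matrix ι ι R}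
    (h : A ∈ closure (orbit (ConjAct (GL ι R)) B)) : A.charpoly = B.charpoly := by
  refine Polynomial.funext fun r => ?_
  have hclosed : IsClosed {Y : Matrix ι ι R | Y.charpoly.eval r = B.charpoly.eval r} := by
    simp only [eval_charpoly]
    exact isClosed_eq (by fun_prop) continuous_const
  exact closure_minimal (fun Y hY => congrArg (eval r) (charpoly_eq_of_mem_orbit hY)) hclosed h

theorem mem_closure_orbit_add_of_isNilpotent [(𝓝[≠] (0 : F)).NeBot] {γ ξ : Matrix ι ι F}
    {d : ι → F} (hγ : γ ∈ orbit (ConjAct (GL ι F)) (diagonal d)) (hξ : IsNilpotent ξ)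
    (hc : Commute γ ξ) : γ ∈ closure (orbit (ConjAct (GL ι F)) (γ + ξ)) := by
  obtain ⟨e, N, hJ, g, hg⟩ := exists_isJordanPair_mem_orbit (γ + ξ)
    (splits_minpoly_add_of_isNilpotent hγ hξ hc)
  let φ := MulSemiringAction.toRingHom (ConjAct (GL ι F)) (Matrix ι ι F) g
  have hsum : g • diagonal e + g • N = γ + ξ := by rw [← smul_add]; exact hg
  have hge : g • diagonal e = γ :=
    eq_of_add_nilpotent_eq (mem_orbit _ g) hγ (hJ.isNilpotent.map φ) hξ (hJ.commute.map φ) hc hsum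
  obtain ⟨w, hw⟩ := hJ.exists_weight
  rw [orbit_eq_iff.2 ⟨g, hg⟩, ← hge]
  exact smul_closure_orbit_subset g _ (Set.smul_mem_smul_set (diagonal_mem_closure_orbit e hw))

theorem exists_isNilpotent_orbit_eq_of_mem_closure [T2Space F] [Infinite F] {γ X : Matrix ι ι F}
    {d : ι → F} (hγ : γ ∈ orbit (ConjAct (GL ι F)) (diagonal d))
    (hX : γ ∈ closure (orbit (ConjAct (GL ι F)) X)) :
    ∃ ξ, IsNilpotent ξ ∧ Commute γ ξ ∧
      orbit (ConjAct (GL ι F)) X = orbit (ConjAct (GL ι F)) (γ + ξ) := by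
  have hchar : γ.charpoly = X.charpoly := charpoly_eq_of_mem_closure_orbit hX
  have hsplits : X.charpoly.Splits := hchar ▸ splits_charpoly_of_mem_orbit_diagonal hγ
  obtain ⟨e, N, hJ, hXe⟩ := exists_isJordanPair_mem_orbit X
    (hsplits.of_dvd X.charpoly_monic.ne_zero X.minpoly_dvd_charpoly)
  have hed : (diagonal d).charpoly = (diagonal e).charpoly := by
    rw [← charpoly_eq_of_mem_orbit hγ, hchar, charpoly_eq_of_mem_orbit hXe, hJ.charpoly_add,
      charpoly_diagonal e]
  obtain ⟨g, rfl⟩ : γ ∈ orbit (ConjAct (GL ι F)) (diagonal e) :=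
    orbit_eq_iff.2 (diagonal_mem_orbit_of_charpoly_eq hed) ▸ hγ
  let φ := MulSemiringAction.toRingHom (ConjAct (GL ι F)) (Matrix ι ι F) g
  refine ⟨g • N, hJ.isNilpotent.map φ, hJ.commute.map φ, ?_⟩
  rw [orbit_eq_iff.2 hXe]
  exact (orbit_eq_iff.2 ⟨g, smul_add g _ _⟩).symm

end OrbitClosure

theorem stmt_12_general {F ι : Type*} [Field F] [TopologicalSpace F] [IsTopologicalRing F]
    [T2Space F] [(𝓝[≠] (0 : F)).NeBot] [Fintype ι] [DecidableEq ι] {γ : Matrix ι ι F} {d : ι → F}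
    (hγ : γ ∈ orbit (ConjAct (GL ι F)) (diagonal d)) :
    (∀ ξ, IsNilpotent ξ → Commute γ ξ → γ ∈ closure (orbit (ConjAct (GL ι F)) (γ + ξ))) ∧
    (∀ ξ ξ', IsNilpotent ξ → IsNilpotent ξ' → Commute γ ξ → Commute γ ξ' →
      (orbit (ConjAct (GL ι F)) (γ + ξ) = orbit (ConjAct (GL ι F)) (γ + ξ') ↔
        ∃ m : ConjAct (GL ι F), m • γ = γ ∧ m • ξ = ξ')) ∧
    (∀ X, γ ∈ closure (orbit (ConjAct (GL ι F)) X) → ∃ ξ, IsNilpotent ξ ∧ Commute γ ξ ∧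
      orbit (ConjAct (GL ι F)) X = orbit (ConjAct (GL ι F)) (γ + ξ)) ∧
    {O | (∃ X, O = orbit (ConjAct (GL ι F)) X) ∧ γ ∈ closure O}.Finite := by
  have : Infinite F := Set.infinite_univ_iff.1 (infinite_of_mem_nhds (0 : F) Filter.univ_mem)
  refine ⟨fun _ => mem_closure_orbit_add_of_isNilpotent hγ,
    fun _ _ => orbit_add_eq_orbit_add_iff hγ,
    fun _ => exists_isNilpotent_orbit_eq_of_mem_closure hγ, ?_⟩
  refine (finite_setOf_orbit_charpoly_eq (splits_charpoly_of_mem_orbit_diagonal hγ)).subset ?_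
  rintro _ ⟨⟨X, rfl⟩, hX⟩
  exact ⟨X, rfl, (charpoly_eq_of_mem_closure_orbit hX).symm⟩

theorem conjOrbit_eq_orbit {F : Type*} [Field F] {n : ℕ} (X : Matrix (Fin n) (Fin n) F) :
    conjOrbit X = orbit (ConjAct (GL (Fin n) F)) X :=
  Set.ext fun _ => exists_congr fun _ => eq_comm

/-- Let `γ` be diagonalizable over `F`, with centralizer `M` in `GL_n(F)`.  The map
`ξ ↦ (γ + ξ)^{GL_n(F)}` induces a bijection from the set of `M`-conjugacy classes of
nilpotent elements of the centralizer algebra of `γ` onto the set of `GL_n(F)`-orbits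
whose closure contains `γ`; in particular the latter set is finite. -/
theorem stmt_12 {F : Type*} [NontriviallyNormedField F] [CharZero F] {n : ℕ}
    (γ : Matrix (Fin n) (Fin n) F)
    (hdiag : ∃ P : GL (Fin n) F, ∃ d : Fin n → F,
      γ = (P : Matrix (Fin n) (Fin n) F) * Matrix.diagonal d *
        ((P⁻¹ : GL (Fin n) F) : Matrix (Fin n) (Fin n) F)) :
    -- the map is well defined: `γ` lies in the closure of the orbit of `γ + ξ`
    (∀ ξ : Matrix (Fin n) (Fin n) F, IsNilpotent ξ → ξ * γ = γ * ξ →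
      γ ∈ closure (conjOrbit (γ + ξ))) ∧
    -- the map is injective on `M`-classes: orbits agree iff `ξ, ξ'` are `M`-conjugate
    (∀ ξ ξ' : Matrix (Fin n) (Fin n) F, IsNilpotent ξ → IsNilpotent ξ' →
      ξ * γ = γ * ξ → ξ' * γ = γ * ξ' →
      (conjOrbit (γ + ξ) = conjOrbit (γ + ξ') ↔
        ∃ m : GL (Fin n) F,
          (m : Matrix (Fin n) (Fin n) F) * γ = γ * (m : Matrix (Fin n) (Fin n) F) ∧
          ξ' = (m : Matrix (Fin n) (Fin n) F) * ξ *
            ((m⁻¹ : GL (Fin n) F) : Matrix (Fin n) (Fin n) F))) ∧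
    -- the map is surjective: every orbit whose closure contains `γ` is of this form
    (∀ X : Matrix (Fin n) (Fin n) F, γ ∈ closure (conjOrbit X) →
      ∃ ξ : Matrix (Fin n) (Fin n) F, IsNilpotent ξ ∧ ξ * γ = γ * ξ ∧
        conjOrbit X = conjOrbit (γ + ξ)) ∧
    -- in particular, the set of such orbits is finite
    {O : Set (Matrix (Fin n) (Fin n) F) |
      (∃ X, O = conjOrbit X) ∧ γ ∈ closure O}.Finite := by
  obtain ⟨P, d, hP⟩ := hdiag
  have hγ : γ ∈ orbit (ConjAct (GL (Fin n) F)) (diagonal d) := ⟨ConjAct.toConjAct P, hP.symm⟩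
  obtain ⟨hmem, hinj, hsurj, hfin⟩ := stmt_12_general hγ
  simp only [conjOrbit_eq_orbit]
  refine ⟨fun ξ hξ hc => hmem ξ hξ hc.symm, fun ξ ξ' hξ hξ' hc hc' => ?_, fun X hX => ?_, hfin⟩
  · rw [hinj ξ ξ' hξ hξ' hc.symm hc'.symm]
    exact exists_congr fun m => and_congr (Units.mul_inv_eq_iff_eq_mul _) eq_comm
  · obtain ⟨ξ, hξ, hc, h⟩ := hsurj X hX
    exact ⟨ξ, hξ, hc.symm, h⟩
end
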